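/- Let s ∈ ℝ. There exists a constant C = C(φ) > 0 such that liminf_{n→∞} ‖g_n ∂_x f_n‖_{H^s(ℝ)} ≥ C, where f_n(x) = 2^{-ns} φ(x) sin((17/12)·2^n x) and g_n(x) = 2^{-n} φ(x). -/

import Mathlib

open MeasureTheory Filter

/-- Fourier transform with convention `f̂(ξ) = ∫ f(x) e^{-i x ξ} dx`. -/
noncomputable def fourierT (f : ℝ → ℂ) (ξ : ℝ) : ℂ :=
  ∫ x : ℝ, f x * Complex.exp (-(Complex.I * x * ξ))

/-- The `H^s(ℝ)` norm, `‖f‖_{H^s}² = ∫ (1+|ξ|²)^s |f̂(ξ)|² dξ`. -/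
noncomputable def sobolevNorm (s : ℝ) (f : ℝ → ℂ) : ℝ :=
  Real.sqrt (∫ ξ : ℝ, (1 + ξ ^ 2) ^ s * ‖fourierT f ξ‖ ^ 2)

/-- Membership in `H^s(ℝ)` (for integrable representatives). -/
def MemSobolev (s : ℝ) (f : ℝ → ℂ) : Prop :=
  MeasureTheory.Integrable f ∧
    MeasureTheory.Integrable (fun ξ : ℝ => (1 + ξ ^ 2) ^ s * ‖fourierT f ξ‖ ^ 2)

/-- The high-frequency functions `f_n(x) = 2^{-ns} φ(x) sin((17/12)·2^n x)`. -/
noncomputable def fn (s : ℝ) (φ : ℝ → ℂ) (n : ℕ) : ℝ → ℂ :=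
  fun x => (((2 : ℝ) ^ (-(n : ℝ) * s) * Real.sin (17 / 12 * 2 ^ n * x) : ℝ) : ℂ) * φ x

/-- The low-frequency functions `g_n(x) = 2^{-n} φ(x)`. -/
noncomputable def gn (φ : ℝ → ℂ) (n : ℕ) : ℝ → ℂ :=
  fun x => (((2 : ℝ) ^ (-(n : ℝ)) : ℝ) : ℂ) * φ x

/-- `φ̂` is an even, real-valued, nonnegative function in `C_c^∞(ℝ)` with `φ̂ = 1` on
`{|ξ| ≤ 1/4}` and `φ̂ = 0` on `{|ξ| ≥ 1/2}`, and `φ` is the (continuous, integrable)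
function on `ℝ` whose Fourier transform is `φ̂`. -/
structure CutoffPair (φhat : ℝ → ℝ) (φ : ℝ → ℂ) : Prop where
  smooth : ContDiff ℝ (⊤ : ℕ∞) φhat
  compactSupport : HasCompactSupport φhat
  even : ∀ ξ : ℝ, φhat (-ξ) = φhat ξ
  nonneg : ∀ ξ : ℝ, 0 ≤ φhat ξ
  eq_one : ∀ ξ : ℝ, |ξ| ≤ 1 / 4 → φhat ξ = 1
  eq_zero : ∀ ξ : ℝ, 1 / 2 ≤ |ξ| → φhat ξ = 0
  continuous : Continuous φ
  integrable : MeasureTheory.Integrable φ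
  fourier_eq : ∀ ξ : ℝ, fourierT φ ξ = (φhat ξ : ℂ)

/-!
The product `g_n ∂_x f_n` is a multiple of `φ · (sin (L ·) φ)'` with `L = (17/12) 2 ^ n`. Writing
`Ψ` for the Fourier transform of `φ²`, its Fourier transform is
`((ξ + L) Ψ (ξ - L) - (ξ - L) Ψ (ξ + L)) / 4`. Since `φ` is band-limited, `Ψ` has compact support,
so for large `L` these are two disjoint bumps centred at `± L`. Moving each bump to the origin and
factoring out `L ^ (2 s + 2)` turns its contribution to the squared `H ^ s` norm into a parametric
integral that is continuous in `L⁻¹`, including at `0`. Hence the norms even converge, to a limit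
that is positive because `Ψ` is not identically zero.
-/

open scoped Topology FourierTransform Convolution

section FourierTransform

variable {f g : ℝ → ℂ}

theorem fourierT_eq_fourier (f : ℝ → ℂ) (ξ : ℝ) : fourierT f ξ = 𝓕 f (ξ / (2 * Real.pi)) := by
  rw [Real.fourier_eq', fourierT]
  congr with x
  rw [smul_eq_mul, mul_comm]
  congr 2
  simp only [RCLike.inner_apply, conj_trivial]
  push_cast
  field_simp

theorem continuous_fourier (hf : Integrable f) : Continuous (𝓕 f) :=
  VectorFourier.fourierIntegral_continuous Real.continuous_fourierChar
    (innerSL ℝ).continuous₂ hf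

theorem continuous_fourierT (hf : Integrable f) : Continuous (fourierT f) := by
  rw [funext (fourierT_eq_fourier f)]
  exact (continuous_fourier hf).comp (by fun_prop)

theorem hasCompactSupport_fourierT_iff :
    HasCompactSupport (fourierT f) ↔ HasCompactSupport (𝓕 f) := by
  have scale_ne_zero : (2 * Real.pi)⁻¹ ≠ 0 := by positivity
  have fourierT_eq_comp :
      fourierT f = 𝓕 f ∘ Homeomorph.mulRight₀ (2 * Real.pi)⁻¹ scale_ne_zero :=
    funext fun ξ => by simp [fourierT_eq_fourier, div_eq_mul_inv]
  rw [fourierT_eq_comp]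
  refine ⟨fun h => ?_, fun h => h.comp_homeomorph _⟩
  simpa only [Function.comp_assoc, Homeomorph.self_comp_symm, Function.comp_id] using
    h.comp_homeomorph (Homeomorph.mulRight₀ (2 * Real.pi)⁻¹ scale_ne_zero).symm

theorem fourierT_const_mul (c : ℂ) (f : ℝ → ℂ) (ξ : ℝ) :
    fourierT (fun x => c * f x) ξ = c * fourierT f ξ := by
  simp only [fourierT, mul_assoc, integral_const_mul]

theorem fourierT_add (hf : Integrable f) (hg : Integrable g) (ξ : ℝ) :
    fourierT (fun x => f x + g x) ξ = fourierT f ξ + fourierT g ξ := by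
  simp only [fourierT_eq_fourier]
  exact congrFun (VectorFourier.fourierIntegral_add Real.continuous_fourierChar
    (innerSL ℝ).continuous₂ hf hg) _

theorem fourierT_deriv (hf : Integrable f) (hf_diff : Differentiable ℝ f)
    (hf_deriv : Integrable (deriv f)) (ξ : ℝ) :
    fourierT (deriv f) ξ = Complex.I * ξ * fourierT f ξ := by
  simp only [fourierT_eq_fourier, Real.fourier_deriv hf hf_diff hf_deriv, smul_eq_mul]
  push_cast
  field_simp

theorem fourierT_exp_mul (f : ℝ → ℂ) (a ξ : ℝ) :
    fourierT (fun x => Complex.exp (Complex.I * a * x) * f x) ξ = fourierT f (ξ - a) := by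
  unfold fourierT
  congr with x
  rw [mul_right_comm, ← Complex.exp_add, mul_comm]
  congr 2
  push_cast
  ring

theorem integrable_exp_mul (hf : Integrable f) (a : ℝ) :
    Integrable fun x : ℝ => Complex.exp (Complex.I * a * x) * f x :=
  hf.bdd_mul (c := 1) (by fun_prop) (.of_forall fun x => by simp [Complex.norm_exp])

end FourierTransform

section Modulation

variable {f : ℝ → ℂ} {x : ℝ}

theorem hasDerivAt_exp_mul (hf : DifferentiableAt ℝ f x) (a : ℝ) :
    HasDerivAt (fun y : ℝ => Complex.exp (Complex.I * a * y) * f y)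
      (Complex.exp (Complex.I * a * x) * (Complex.I * a * f x + deriv f x)) x := by
  have hexp : HasDerivAt (fun y : ℝ => Complex.exp (Complex.I * a * y))
      (Complex.exp (Complex.I * a * x) * (Complex.I * a)) x := by
    simpa using ((Complex.ofRealCLM.hasDerivAt (x := x)).const_mul (Complex.I * a)).cexp
  exact (hexp.fun_mul hf.hasDerivAt).congr_deriv (by ring)

theorem mul_deriv_exp_mul (hf : DifferentiableAt ℝ f x) (a : ℝ) :
    f x * deriv (fun y : ℝ => Complex.exp (Complex.I * a * y) * f y) x =
      1 / 2 * (deriv (fun y : ℝ => Complex.exp (Complex.I * a * y) * (f y * f y)) x +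
        Complex.I * a * (Complex.exp (Complex.I * a * x) * (f x * f x))) := by
  have deriv_sq : deriv (fun y => f y * f y) x = 2 * (f x * deriv f x) := by
    rw [deriv_fun_mul hf hf]
    ring
  rw [(hasDerivAt_exp_mul hf a).deriv,
    (hasDerivAt_exp_mul (hf.fun_mul hf) a).deriv, deriv_sq]
  ring

theorem mul_deriv_sin_mul (hf : DifferentiableAt ℝ f x) (L : ℝ) :
    f x * deriv (fun y : ℝ => (Real.sin (L * y) : ℂ) * f y) x =
      -(Complex.I / 2) *
          (f x * deriv (fun y : ℝ => Complex.exp (Complex.I * L * y) * f y) x) +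
        Complex.I / 2 *
          (f x * deriv (fun y : ℝ => Complex.exp (Complex.I * (-L : ℝ) * y) * f y) x) := by
  have sin_mul_eq : (fun y : ℝ => (Real.sin (L * y) : ℂ) * f y) = fun y : ℝ =>
      -(Complex.I / 2) * (Complex.exp (Complex.I * L * y) * f y) +
        Complex.I / 2 * (Complex.exp (Complex.I * (-L : ℝ) * y) * f y) := by
    ext y
    rw [Complex.ofReal_sin, Complex.sin]
    push_cast
    ring_nf
  have hpos := hasDerivAt_exp_mul hf L
  have hneg := hasDerivAt_exp_mul hf (-L)
  rw [sin_mul_eq, ((hpos.const_mul _).fun_add (hneg.const_mul _)).deriv, hpos.deriv, hneg.deriv]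
  ring

end Modulation

/-- Continuous integrable functions on `ℝ` with compactly supported Fourier transform. Continuity
selects the representative for which Fourier inversion holds everywhere. -/
structure BandLimited (f : ℝ → ℂ) : Prop where
  continuous : Continuous f
  integrable : Integrable f
  hasCompactSupport : HasCompactSupport (fourierT f)

namespace BandLimited

variable {f g : ℝ → ℂ}

theorem hasCompactSupport_fourier (hf : BandLimited f) : HasCompactSupport (𝓕 f) :=
  hasCompactSupport_fourierT_iff.1 hf.hasCompactSupport

theorem integrable_fourier (hf : BandLimited f) : Integrable (𝓕 f) :=
  (continuous_fourier hf.integrable).integrable_of_hasCompactSupport hf.hasCompactSupport_fourier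

theorem fourierInv_fourier (hf : BandLimited f) : 𝓕⁻ (𝓕 f) = f :=
  hf.continuous.fourierInv_fourier_eq hf.integrable hf.integrable_fourier

theorem eq_zero_of_fourierT_eq_zero (hf : BandLimited f) (h : fourierT f = 0) : f = 0 := by
  have fourier_eq_zero : 𝓕 f = 0 := funext fun w => by
    simpa [fourierT_eq_fourier, Real.pi_ne_zero] using congrFun h (w * (2 * Real.pi))
  rw [← hf.fourierInv_fourier, fourier_eq_zero]
  exact funext fun x => by simp [Real.fourierInv_eq]

theorem exists_fourier_eq (hf : BandLimited f) :
    ∃ F : ℝ → ℂ, Continuous F ∧ HasCompactSupport F ∧ 𝓕 F = f :=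
  ⟨fun w => 𝓕 f (-w), (continuous_fourier hf.integrable).comp continuous_neg,
    hf.hasCompactSupport_fourier.comp_homeomorph (Homeomorph.neg ℝ), by
      rw [← Real.fourierInv_eq_fourier_comp_neg, hf.fourierInv_fourier]⟩

theorem exists_norm_le (hf : BandLimited f) : ∃ C, ∀ x, ‖f x‖ ≤ C := by
  obtain ⟨F, -, -, rfl⟩ := hf.exists_fourier_eq
  exact ⟨∫ w, ‖F w‖, fun x => VectorFourier.norm_fourierIntegral_le_integral_norm _ _ _ _ _⟩

theorem differentiable (hf : BandLimited f) : Differentiable ℝ f := by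
  obtain ⟨F, hF, hF_supp, rfl⟩ := hf.exists_fourier_eq
  exact fun x => (Real.hasDerivAt_fourier (hF.integrable_of_hasCompactSupport hF_supp)
    ((continuous_id.smul hF).integrable_of_hasCompactSupport hF_supp.smul_left) x).differentiableAt

theorem exists_norm_deriv_le (hf : BandLimited f) : ∃ C, ∀ x, ‖deriv f x‖ ≤ C := by
  obtain ⟨F, hF, hF_supp, rfl⟩ := hf.exists_fourier_eq
  rw [Real.deriv_fourier (hF.integrable_of_hasCompactSupport hF_supp)
    ((continuous_id.smul hF).integrable_of_hasCompactSupport hF_supp.smul_left)]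
  exact ⟨_, fun x => VectorFourier.norm_fourierIntegral_le_integral_norm _ _ _ _ _⟩

theorem integrable_mul (hf : BandLimited f) (hg : BandLimited g) :
    Integrable fun x => f x * g x :=
  let ⟨_, hC⟩ := hf.exists_norm_le
  hg.integrable.bdd_mul hf.continuous.aestronglyMeasurable (.of_forall hC)

theorem integrable_mul_deriv (hf : BandLimited f) (hg : BandLimited g) :
    Integrable fun x => f x * deriv g x :=
  let ⟨_, hC⟩ := hg.exists_norm_deriv_le
  hf.integrable.mul_bdd (measurable_deriv g).aestronglyMeasurable (.of_forall hC)

theorem fourier_mul (hf : BandLimited f) (hg : BandLimited g) :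
    𝓕 (fun x => f x * g x) = 𝓕 f ⋆[ContinuousLinearMap.mul ℂ ℂ] 𝓕 g := by
  have fourierInv_convolution :
      𝓕⁻ (𝓕 f ⋆[ContinuousLinearMap.mul ℂ ℂ] 𝓕 g) = fun x => f x * g x := funext fun x => by
    rw [Real.fourierInv_eq_fourier_neg,
      Real.fourier_mul_convolution_eq hf.integrable_fourier hg.integrable_fourier,
      ← Real.fourierInv_eq_fourier_neg, ← Real.fourierInv_eq_fourier_neg,
      hf.fourierInv_fourier, hg.fourierInv_fourier]
  have convolution_continuous : Continuous (𝓕 f ⋆[ContinuousLinearMap.mul ℂ ℂ] 𝓕 g) :=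
    hg.hasCompactSupport_fourier.continuous_convolution_right _
      hf.integrable_fourier.locallyIntegrable (continuous_fourier hg.integrable)
  have convolution_integrable : Integrable (𝓕 f ⋆[ContinuousLinearMap.mul ℂ ℂ] 𝓕 g) :=
    hf.integrable_fourier.integrable_convolution _ hg.integrable_fourier
  have hfg := hf.integrable_mul hg
  have fourier_convolution_integrable :
      Integrable (𝓕 (𝓕 f ⋆[ContinuousLinearMap.mul ℂ ℂ] 𝓕 g)) := by
    rw [← fourierInv_convolution] at hfg
    simpa only [Real.fourierInv_eq_fourier_neg, neg_neg] using hfg.comp_neg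
  rw [← fourierInv_convolution, convolution_continuous.fourier_fourierInv_eq
    convolution_integrable fourier_convolution_integrable]

theorem mul (hf : BandLimited f) (hg : BandLimited g) : BandLimited fun x => f x * g x where
  continuous := hf.continuous.mul hg.continuous
  integrable := hf.integrable_mul hg
  hasCompactSupport := by
    rw [hasCompactSupport_fourierT_iff, hf.fourier_mul hg]
    exact hf.hasCompactSupport_fourier.convolution _ hg.hasCompactSupport_fourier

theorem integral_sq_norm_fourierT_pos (hf : BandLimited f) (hf_ne : f ≠ 0) :
    0 < ∫ ξ, ‖fourierT f ξ‖ ^ 2 := by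
  obtain ⟨ξ, hξ⟩ := Function.ne_iff.1 (mt hf.eq_zero_of_fourierT_eq_zero hf_ne)
  have hcont : Continuous fun ξ => ‖fourierT f ξ‖ ^ 2 :=
    (continuous_fourierT hf.integrable).norm.pow 2
  have hsupp : HasCompactSupport fun ξ => ‖fourierT f ξ‖ ^ 2 :=
    hf.hasCompactSupport.comp_left (g := fun z => ‖z‖ ^ 2) (by simp)
  exact hcont.integral_pos_of_hasCompactSupport_nonneg_nonzero hsupp (fun _ => by positivity)
    (pow_ne_zero 2 (norm_ne_zero_iff.2 hξ))

end BandLimited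

theorem CutoffPair.bandLimited {φhat : ℝ → ℝ} {φ : ℝ → ℂ} (hφ : CutoffPair φhat φ) :
    BandLimited φ where
  continuous := hφ.continuous
  integrable := hφ.integrable
  hasCompactSupport := by
    rw [funext hφ.fourier_eq]
    exact hφ.compactSupport.comp_left Complex.ofReal_zero

theorem CutoffPair.ne_zero {φhat : ℝ → ℝ} {φ : ℝ → ℂ} (hφ : CutoffPair φhat φ) : φ ≠ 0 := by
  rintro rfl
  simpa [fourierT, hφ.eq_one] using hφ.fourier_eq 0

section SobolevNorm

variable (s : ℝ)

theorem sobolevNorm_const_mul (c : ℂ) (f : ℝ → ℂ) :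
    sobolevNorm s (fun x => c * f x) = ‖c‖ * sobolevNorm s f := by
  simp only [sobolevNorm, fourierT_const_mul, norm_mul, mul_pow, mul_left_comm _ (‖c‖ ^ 2),
    integral_const_mul, Real.sqrt_mul (sq_nonneg ‖c‖), Real.sqrt_sq (norm_nonneg c)]

/-- The squared weighted `L²` norm `∫ (1 + ξ²)^s ‖(ξ + a) Ψ (ξ - a)‖² dξ` of a bump centred at
`a = ε⁻¹`, recentred at the origin and divided by `|a| ^ (2 s + 2)`. In terms of `ε` the formula
makes sense at `ε = 0` as well, which describes the limit `|a| → ∞`. -/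
noncomputable def rescaledBumpEnergy (Ψ : ℝ → ℂ) (ε : ℝ) : ℝ :=
  ∫ η : ℝ, (ε ^ 2 + (1 + ε * η) ^ 2) ^ s * ((2 + ε * η) ^ 2 * ‖Ψ η‖ ^ 2)

variable {Ψ : ℝ → ℂ}

theorem rescaledBumpEnergy_zero (Ψ : ℝ → ℂ) :
    rescaledBumpEnergy s Ψ 0 = 4 * ∫ η, ‖Ψ η‖ ^ 2 := by
  norm_num [rescaledBumpEnergy, integral_const_mul]

theorem continuous_rescaledBumpEnergy (hΨ : Continuous Ψ) (hΨ_supp : HasCompactSupport Ψ) :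
    Continuous (rescaledBumpEnergy s Ψ) := by
  rw [← continuousOn_univ]
  refine continuousOn_integral_of_compact_support hΨ_supp (Continuous.continuousOn ?_)
    fun ε η _ hη => by simp [image_eq_zero_of_notMem_tsupport hη]
  have base_ne_zero (p : ℝ × ℝ) : p.1 ^ 2 + (1 + p.1 * p.2) ^ 2 ≠ 0 := by
    intro h
    have hε : p.1 = 0 := by nlinarith
    simp [hε] at h
  exact (Continuous.rpow_const (by fun_prop) fun p => .inl (base_ne_zero p)).mul (by fun_prop)

theorem integral_bump_eq (Ψ : ℝ → ℂ) {a : ℝ} (ha : a ≠ 0) :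
    ∫ ξ : ℝ, (1 + ξ ^ 2) ^ s * ‖((ξ + a : ℝ) : ℂ) * Ψ (ξ - a)‖ ^ 2 =
      (|a| ^ (s + 1)) ^ 2 * rescaledBumpEnergy s Ψ a⁻¹ := by
  have sq_rpow : (|a| ^ (s + 1)) ^ 2 = (a ^ 2) ^ s * a ^ 2 := by
    rw [Real.rpow_add_one (abs_ne_zero.2 ha), mul_pow, Real.rpow_pow_comm (abs_nonneg a), sq_abs]
  rw [rescaledBumpEnergy, ← integral_const_mul, ← integral_add_right_eq_self _ a]
  congr with η
  have weight_eq : 1 + (η + a) ^ 2 = a ^ 2 * (a⁻¹ ^ 2 + (1 + a⁻¹ * η) ^ 2) := by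
    field_simp
    ring
  have factor_eq : η + a + a = a * (2 + a⁻¹ * η) := by
    field_simp
    ring
  rw [weight_eq, factor_eq, Real.mul_rpow (by positivity) (by positivity), sq_rpow, norm_mul,
    Complex.norm_real, Real.norm_eq_abs, mul_pow, sq_abs, add_sub_cancel_right]
  ring

theorem integrable_bump (hΨ : Continuous Ψ) (hΨ_supp : HasCompactSupport Ψ) (a : ℝ) :
    Integrable fun ξ : ℝ => (1 + ξ ^ 2) ^ s * ‖((ξ + a : ℝ) : ℂ) * Ψ (ξ - a)‖ ^ 2 := by
  have weight_continuous : Continuous fun ξ : ℝ => (1 + ξ ^ 2) ^ s :=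
    Continuous.rpow_const (by fun_prop) fun ξ => .inl (by positivity)
  refine (weight_continuous.mul (by fun_prop)).integrable_of_hasCompactSupport ?_
  refine (hΨ_supp.comp_homeomorph (Homeomorph.subRight a)).mono fun ξ hξ => ?_
  contrapose! hξ
  simp_all

theorem eventually_forall_sub_eq_zero_or_add_eq_zero (hΨ_supp : HasCompactSupport Ψ) :
    ∀ᶠ L in atTop, ∀ ξ, Ψ (ξ - L) = 0 ∨ Ψ (ξ + L) = 0 := by
  obtain ⟨R, hR⟩ := hΨ_supp.isCompact.isBounded.exists_norm_le
  filter_upwards [eventually_gt_atTop R] with L hL ξ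
  by_contra! h
  have h_sub := abs_le.1 (hR _ (subset_tsupport Ψ h.1))
  have h_add := abs_le.1 (hR _ (subset_tsupport Ψ h.2))
  linarith [h_sub.1, h_add.2]

theorem integral_two_bumps_eventuallyEq (hΨ : Continuous Ψ) (hΨ_supp : HasCompactSupport Ψ) :
    (fun L : ℝ => ∫ ξ : ℝ, (1 + ξ ^ 2) ^ s *
      ‖((ξ + L : ℝ) : ℂ) * Ψ (ξ - L) - ((ξ - L : ℝ) : ℂ) * Ψ (ξ + L)‖ ^ 2) =ᶠ[atTop]
    fun L => (L ^ (s + 1)) ^ 2 * (rescaledBumpEnergy s Ψ L⁻¹ + rescaledBumpEnergy s Ψ (-L⁻¹)) := by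
  filter_upwards [eventually_forall_sub_eq_zero_or_add_eq_zero hΨ_supp, eventually_gt_atTop 0]
    with L hdisjoint hL
  have sq_norm_sub (ξ : ℝ) :
      ‖((ξ + L : ℝ) : ℂ) * Ψ (ξ - L) - ((ξ - L : ℝ) : ℂ) * Ψ (ξ + L)‖ ^ 2 =
        ‖((ξ + L : ℝ) : ℂ) * Ψ (ξ - L)‖ ^ 2 + ‖((ξ + -L : ℝ) : ℂ) * Ψ (ξ - -L)‖ ^ 2 := by
    rw [sub_neg_eq_add, ← sub_eq_add_neg]
    rcases hdisjoint ξ with h | h <;> simp [h]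
  simp only [sq_norm_sub, mul_add]
  rw [integral_add (integrable_bump s hΨ hΨ_supp L) (integrable_bump s hΨ hΨ_supp (-L)),
    integral_bump_eq s Ψ hL.ne', integral_bump_eq s Ψ (neg_ne_zero.2 hL.ne'), abs_neg,
    abs_of_pos hL, inv_neg]

end SobolevNorm

namespace BandLimited

variable {φ : ℝ → ℂ}

theorem integrable_mul_deriv_exp_mul (hφ : BandLimited φ) (a : ℝ) :
    Integrable fun x => φ x * deriv (fun y : ℝ => Complex.exp (Complex.I * a * y) * φ y) x := by
  simp only [(hasDerivAt_exp_mul (hφ.differentiable _) a).deriv]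
  refine (integrable_exp_mul (((hφ.integrable_mul hφ).const_mul (Complex.I * a)).add
    (hφ.integrable_mul_deriv hφ)) a).congr (.of_forall fun x => ?_)
  simp only [Pi.add_apply]
  ring

theorem fourierT_mul_deriv_exp_mul (hφ : BandLimited φ) (a ξ : ℝ) :
    fourierT (fun x => φ x * deriv (fun y : ℝ => Complex.exp (Complex.I * a * y) * φ y) x) ξ =
      Complex.I / 2 * (((ξ + a : ℝ) : ℂ) * fourierT (fun x => φ x * φ x) (ξ - a)) := by
  have modulated_integrable := integrable_exp_mul (hφ.integrable_mul hφ) a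
  have modulated_differentiable :
      Differentiable ℝ fun y : ℝ => Complex.exp (Complex.I * a * y) * (φ y * φ y) := fun x =>
    (hasDerivAt_exp_mul ((hφ.mul hφ).differentiable x) a).differentiableAt
  have modulated_deriv_integrable :
      Integrable (deriv fun y : ℝ => Complex.exp (Complex.I * a * y) * (φ y * φ y)) := by
    refine (((hφ.integrable_mul_deriv_exp_mul a).const_mul 2).sub
      (modulated_integrable.const_mul (Complex.I * a))).congr (.of_forall fun x => ?_)
    simp only [Pi.sub_apply, mul_deriv_exp_mul (hφ.differentiable _)]
    ring
  simp only [mul_deriv_exp_mul (hφ.differentiable _)]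
  rw [fourierT_const_mul,
    fourierT_add modulated_deriv_integrable (modulated_integrable.const_mul (Complex.I * a)),
    fourierT_deriv modulated_integrable modulated_differentiable modulated_deriv_integrable,
    fourierT_const_mul, fourierT_exp_mul]
  push_cast
  ring

theorem fourierT_mul_deriv_sin_mul (hφ : BandLimited φ) (L ξ : ℝ) :
    fourierT (fun x => φ x * deriv (fun y : ℝ => (Real.sin (L * y) : ℂ) * φ y) x) ξ =
      1 / 4 * (((ξ + L : ℝ) : ℂ) * fourierT (fun x => φ x * φ x) (ξ - L) -
        ((ξ - L : ℝ) : ℂ) * fourierT (fun x => φ x * φ x) (ξ + L)) := by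
  simp only [mul_deriv_sin_mul (hφ.differentiable _)]
  rw [fourierT_add ((hφ.integrable_mul_deriv_exp_mul L).const_mul _)
      ((hφ.integrable_mul_deriv_exp_mul (-L)).const_mul _),
    fourierT_const_mul, fourierT_const_mul, hφ.fourierT_mul_deriv_exp_mul,
    hφ.fourierT_mul_deriv_exp_mul, sub_neg_eq_add, ← sub_eq_add_neg]
  linear_combination (-(1 / 4 : ℂ) * (((ξ + L : ℝ) : ℂ) * fourierT (fun x => φ x * φ x) (ξ - L) -
    ((ξ - L : ℝ) : ℂ) * fourierT (fun x => φ x * φ x) (ξ + L))) * Complex.I_sq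

theorem sobolevNorm_mul_deriv_sin_mul_eventuallyEq (s : ℝ) (hφ : BandLimited φ) :
    (fun L : ℝ => sobolevNorm s
      fun x => φ x * deriv (fun y : ℝ => (Real.sin (L * y) : ℂ) * φ y) x) =ᶠ[atTop]
    fun L => L ^ (s + 1) * √(1 / 16 *
      (rescaledBumpEnergy s (fourierT fun x => φ x * φ x) L⁻¹ +
        rescaledBumpEnergy s (fourierT fun x => φ x * φ x) (-L⁻¹))) := by
  have hφφ := hφ.mul hφ
  filter_upwards [integral_two_bumps_eventuallyEq s (continuous_fourierT hφφ.integrable)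
    hφφ.hasCompactSupport, eventually_gt_atTop 0] with L hbumps hL
  have norm_quarter : ‖(1 / 4 : ℂ)‖ ^ 2 = 1 / 16 := by norm_num
  simp only [sobolevNorm, hφ.fourierT_mul_deriv_sin_mul, norm_mul (1 / 4 : ℂ), mul_pow,
    norm_quarter, mul_left_comm _ (1 / 16 : ℝ), integral_const_mul]
  rw [hbumps, mul_left_comm, Real.sqrt_mul (sq_nonneg _), Real.sqrt_sq (by positivity)]

theorem tendsto_sobolevNorm_mul_deriv_sin_mul (s : ℝ) (hφ : BandLimited φ) :
    Tendsto (fun L : ℝ => (L ^ (s + 1))⁻¹ *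
        sobolevNorm s fun x => φ x * deriv (fun y : ℝ => (Real.sin (L * y) : ℂ) * φ y) x)
      atTop (𝓝 √((∫ ξ, ‖fourierT (fun x => φ x * φ x) ξ‖ ^ 2) / 2)) := by
  have hφφ := hφ.mul hφ
  have henergy : Tendsto (rescaledBumpEnergy s (fourierT fun x => φ x * φ x)) (𝓝 0)
      (𝓝 (4 * ∫ ξ, ‖fourierT (fun x => φ x * φ x) ξ‖ ^ 2)) :=
    rescaledBumpEnergy_zero s (fourierT fun x => φ x * φ x) ▸ (continuous_rescaledBumpEnergy s
      (continuous_fourierT hφφ.integrable) hφφ.hasCompactSupport).tendsto 0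
  have neg_inv_tendsto : Tendsto (fun L : ℝ => -L⁻¹) atTop (𝓝 0) := by
    simpa using tendsto_inv_atTop_zero.neg (G := ℝ)
  have hlim := (((henergy.comp tendsto_inv_atTop_zero).add
    (henergy.comp neg_inv_tendsto)).const_mul (1 / 16)).sqrt
  convert hlim.congr' ?_ using 2
  · ring_nf
  · filter_upwards [hφ.sobolevNorm_mul_deriv_sin_mul_eventuallyEq s, eventually_gt_atTop 0]
      with L hnorm hL
    rw [hnorm, inv_mul_cancel_left₀ (by positivity)]
    rfl

end BandLimited

theorem gn_mul_deriv_fn (s : ℝ) (φ : ℝ → ℂ) (n : ℕ) (x : ℝ) :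
    gn φ n x * deriv (fn s φ n) x = (((2 : ℝ) ^ (-(n : ℝ) * (s + 1)) : ℝ) : ℂ) *
      (φ x * deriv (fun y : ℝ => (Real.sin (17 / 12 * 2 ^ n * y) : ℂ) * φ y) x) := by
  have fn_eq : fn s φ n = fun y => (((2 : ℝ) ^ (-(n : ℝ) * s) : ℝ) : ℂ) *
      ((Real.sin (17 / 12 * 2 ^ n * y) : ℂ) * φ y) := by
    ext y
    rw [fn, Complex.ofReal_mul, mul_assoc]
  rw [fn_eq, deriv_const_mul_field', gn, mul_add_one, Real.rpow_add two_pos, Complex.ofReal_mul]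
  ring

theorem BandLimited.tendsto_sobolevNorm_gn_mul_deriv_fn {φ : ℝ → ℂ} (s : ℝ) (hφ : BandLimited φ) :
    Tendsto (fun n : ℕ => sobolevNorm s fun x => gn φ n x * deriv (fn s φ n) x) atTop
      (𝓝 ((17 / 12) ^ (s + 1) * √((∫ ξ, ‖fourierT (fun x => φ x * φ x) ξ‖ ^ 2) / 2))) := by
  have frequency_tendsto : Tendsto (fun n : ℕ => (17 / 12 * 2 ^ n : ℝ)) atTop atTop :=
    (tendsto_pow_atTop_atTop_of_one_lt one_lt_two).const_mul_atTop (by norm_num)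
  refine (((hφ.tendsto_sobolevNorm_mul_deriv_sin_mul s).comp frequency_tendsto).const_mul
    ((17 / 12) ^ (s + 1))).congr fun n => ?_
  have scale_eq : (2 : ℝ) ^ (-(n : ℝ) * (s + 1)) =
      (17 / 12) ^ (s + 1) * ((17 / 12 * 2 ^ n : ℝ) ^ (s + 1))⁻¹ := by
    rw [Real.mul_rpow (by norm_num) (by positivity), mul_inv, mul_inv_cancel_left₀ (by positivity),
      ← Real.rpow_natCast_mul two_pos.le, neg_mul, Real.rpow_neg two_pos.le]
  simp only [gn_mul_deriv_fn, sobolevNorm_const_mul, Complex.norm_real, Function.comp_apply]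
  rw [Real.norm_of_nonneg (by positivity), scale_eq, mul_assoc]

theorem liminf_gn_deriv_fn_general (s : ℝ) {φ : ℝ → ℂ} (hφ : BandLimited φ) (hφ_ne : φ ≠ 0) :
    ∃ C : ℝ, 0 < C ∧
      C ≤ Filter.liminf
        (fun n : ℕ => sobolevNorm s (fun x => gn φ n x * deriv (fn s φ n) x))
        Filter.atTop := by
  have sq_ne_zero : (fun x => φ x * φ x) ≠ 0 := fun h =>
    hφ_ne (funext fun x => mul_self_eq_zero.1 (congrFun h x))
  have energy_pos := (hφ.mul hφ).integral_sq_norm_fourierT_pos sq_ne_zero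
  exact ⟨_, by positivity, (hφ.tendsto_sobolevNorm_gn_mul_deriv_fn s).liminf_eq.ge⟩

/-- For any `s ∈ ℝ` there is `C = C(φ) > 0` such that
`liminf_{n→∞} ‖g_n ∂_x f_n‖_{H^s} ≥ C`. -/
theorem liminf_gn_deriv_fn (s : ℝ) (φhat : ℝ → ℝ) (φ : ℝ → ℂ) (hφ : CutoffPair φhat φ) :
    ∃ C : ℝ, 0 < C ∧
      C ≤ Filter.liminf
        (fun n : ℕ => sobolevNorm s (fun x => gn φ n x * deriv (fn s φ n) x))
        Filter.atTop :=
  liminf_gn_deriv_fn_general s hφ.bandLimited hφ.ne_zero
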